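/- arXiv:2406.11365 — 2 statements merged into one kernel-verified Lean document; each statement's English description precedes it below -/
import Mathlib

section
/- S_n is a fundamental solution of the heat operator ∂_t − Δ with pole at (0,0): for every compactly supported C^∞ test function φ : ℝ × ℝⁿ → ℝ, ∫_{(0,∞) × ℝⁿ} S_n(t,x)·(−∂_t φ(t,x) − Δφ(t,x)) dx dt = φ(0,0), where Δφ = Σ_{i=1}^n ∂²φ/∂x_i² and the integral converges absolutely. -/
open Real MeasureTheory

/-- The fundamental solution of the heat equation in `ℝⁿ`. -/
noncomputable def Sn (n : ℕ) (t : ℝ) (x : EuclideanSpace ℝ (Fin n)) : ℝ :=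
  if 0 < t then (4 * Real.pi * t) ^ (-(n : ℝ) / 2) * Real.exp (-‖x‖ ^ 2 / (4 * t)) else 0

section helpers

open Filter Topology Set

local notation "E" n => EuclideanSpace ℝ (Fin n)

noncomputable def gG (n : ℕ) (y : E n) : ℝ :=
  (4 * Real.pi) ^ (-(n : ℝ) / 2) * Real.exp (-(1/4) * ‖y‖ ^ 2)

lemma gexp_int (n : ℕ) {b : ℝ} (hb : 0 < b) :
    Integrable (fun y : E n => Real.exp (-b * ‖y‖ ^ 2)) := by
  have h := GaussianFourier.integrable_cexp_neg_mul_sq_norm_add (V := E n) (b := (b : ℂ))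
    (by simpa using hb) 0 0
  have h2 := h.norm
  refine h2.congr (Eventually.of_forall fun y => ?_)
  simp only [Complex.norm_exp]
  congr 1
  simp [← Complex.ofReal_pow]

lemma gG_cont (n : ℕ) : Continuous (gG n) := by
  unfold gG; fun_prop

lemma gG_nonneg (n : ℕ) (y : E n) : 0 ≤ gG n y := by
  unfold gG; positivity

lemma gG_int (n : ℕ) : Integrable (gG n) :=
  (gexp_int n (by norm_num : (0:ℝ) < 1/4)).const_mul _

lemma gG_integral (n : ℕ) : ∫ y, gG n y = 1 := by
  unfold gG
  rw [integral_const_mul, GaussianFourier.integral_rexp_neg_mul_sq_norm (by norm_num)]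
  rw [finrank_euclideanSpace_fin, show Real.pi / (1/4) = 4 * Real.pi by ring,
    ← Real.rpow_add (by positivity)]
  rw [show -(n:ℝ)/2 + n/2 = 0 by ring, Real.rpow_zero]

lemma gG_norm_int (n : ℕ) : Integrable (fun y : E n => gG n y * ‖y‖) := by
  refine Integrable.mono' ((gexp_int n (by norm_num : (0:ℝ) < 1/8)).const_mul
    ((4 * Real.pi) ^ (-(n : ℝ) / 2) * 2)) ?_ (Eventually.of_forall fun y => ?_)
  · exact ((gG_cont n).mul continuous_norm).aestronglyMeasurable
  · rw [Real.norm_of_nonneg (mul_nonneg (gG_nonneg n y) (norm_nonneg _))]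
    unfold gG
    have h1 : ‖y‖ ≤ 2 * Real.exp (1/8 * ‖y‖^2) := by
      have := Real.add_one_le_exp (1/8 * ‖y‖^2)
      nlinarith [sq_nonneg (‖y‖ - 2)]
    have h2 : Real.exp (-(1/8) * ‖y‖ ^ 2) = Real.exp (-(1/4) * ‖y‖ ^ 2) * Real.exp (1/8 * ‖y‖^2) := by
      rw [← Real.exp_add]; congr 1; ring
    rw [h2]
    calc _ ≤ (4 * Real.pi) ^ (-(n : ℝ) / 2) * Real.exp (-(1/4) * ‖y‖ ^ 2) *
          (2 * Real.exp (1/8 * ‖y‖^2)) := by gcongr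
      _ = _ := by ring

lemma Sn_scale (n : ℕ) {t : ℝ} (ht : 0 < t) (y : E n) :
    Sn n t (√t • y) = t ^ (-(n:ℝ)/2) * gG n y := by
  unfold Sn gG
  rw [if_pos ht, norm_smul, Real.mul_rpow (by positivity) ht.le, mul_pow, Real.norm_eq_abs, sq_abs,
    Real.sq_sqrt ht.le]
  rw [show -(t * ‖y‖^2) / (4*t) = -(1/4) * ‖y‖^2 by field_simp]
  ring

lemma Sn_integral (n : ℕ) {t : ℝ} (ht : 0 < t) (u : (E n) → ℝ) :
    ∫ x, Sn n t x * u x = ∫ y, gG n y * u (√t • y) := by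
  have h := Measure.integral_comp_smul (volume : Measure (E n)) (fun x => Sn n t x * u x) (√t)
  simp only [Sn_scale n ht, finrank_euclideanSpace_fin] at h
  have hs : √t ^ n = t ^ ((n:ℝ)/2) := by
    rw [Real.sqrt_eq_rpow, ← Real.rpow_natCast, ← Real.rpow_mul ht.le]; congr 1; ring
  have hp : 0 < t ^ ((n:ℝ)/2) := by positivity
  have hn : t ^ (-(n:ℝ)/2) = (t ^ ((n:ℝ)/2))⁻¹ := by rw [neg_div, Real.rpow_neg ht.le]
  rw [hs, abs_of_pos (by positivity), hn] at h
  simp only [mul_assoc, integral_const_mul, smul_eq_mul] at h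
  exact (mul_left_cancel₀ (by positivity) h).symm

lemma Sn_int (n : ℕ) {t : ℝ} (ht : 0 < t) : Integrable (Sn n t) := by
  have : Sn n t = fun x => (4 * Real.pi * t) ^ (-(n : ℝ) / 2) *
      Real.exp (-(1/(4*t)) * ‖x‖ ^ 2) := by
    ext x; unfold Sn; rw [if_pos ht]; congr 2; ring
  rw [this]
  exact (gexp_int n (by positivity)).const_mul _

lemma Sn_nonneg (n : ℕ) (t : ℝ) (x : E n) : 0 ≤ Sn n t x := by
  unfold Sn; split_ifs <;> positivity

lemma Sn_meas (n : ℕ) : Measurable (fun p : ℝ × (E n) => Sn n p.1 p.2) := by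
  unfold Sn
  refine Measurable.ite (measurableSet_lt measurable_const measurable_fst) ?_ measurable_const
  fun_prop

lemma Sn_int_prod (n : ℕ) (T : ℝ) :
    Integrable (fun p : ℝ × (E n) => Sn n p.1 p.2)
      ((volume.restrict (Ioc 0 T)).prod volume) := by
  rw [integrable_prod_iff (Sn_meas n).aestronglyMeasurable]
  constructor
  · filter_upwards [ae_restrict_mem measurableSet_Ioc] with t ht
    exact Sn_int n ht.1
  · have : IntegrableOn (fun _ : ℝ => (1:ℝ)) (Ioc 0 T) := by simp
    refine Integrable.congr this ?_
    filter_upwards [ae_restrict_mem measurableSet_Ioc] with t ht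
    have h := Sn_integral n ht.1 (fun _ => 1)
    simp only [mul_one, gG_integral] at h
    simp_rw [Real.norm_of_nonneg (Sn_nonneg n _ _)]
    exact h.symm

lemma supp_T {n : ℕ} {ψ : ℝ × (E n) → ℝ} (hs : HasCompactSupport ψ) :
    ∃ T : ℝ, ∀ t x, T < t → ψ (t, x) = 0 := by
  obtain ⟨R, hR⟩ := hs.isCompact.isBounded.exists_norm_le
  refine ⟨R, fun t x ht => ?_⟩
  by_contra h
  have h1 := hR (t, x) (subset_tsupport _ h)
  have h2 : ‖t‖ ≤ ‖(t, x)‖ := norm_fst_le (t, x)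
  have := le_abs_self t
  rw [Real.norm_eq_abs] at h2
  linarith

lemma Snψ_int {n : ℕ} {ψ : ℝ × (E n) → ℝ} (hc : Continuous ψ) (hs : HasCompactSupport ψ) :
    IntegrableOn (fun p : ℝ × (E n) => Sn n p.1 p.2 * ψ p) (Ioi (0:ℝ) ×ˢ univ) := by
  obtain ⟨T, hT⟩ := supp_T hs
  obtain ⟨C, hC⟩ := hs.exists_bound_of_continuous hc
  have h1 : IntegrableOn (fun p : ℝ × (E n) => Sn n p.1 p.2 * ψ p) (Ioc (0:ℝ) T ×ˢ univ) := by
    have := Sn_int_prod n T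
    unfold IntegrableOn
    rw [Measure.volume_eq_prod, ← Measure.prod_restrict, Measure.restrict_univ]
    exact this.mul_bdd (c := C) hc.aestronglyMeasurable (Eventually.of_forall hC)
  refine h1.of_forall_sdiff_eq_zero (measurableSet_Ioi.prod MeasurableSet.univ) ?_
  rintro ⟨t, x⟩ ⟨h2, h3⟩
  have : T < t := by
    by_contra h
    exact h3 ⟨⟨h2.1, not_lt.1 h⟩, trivial⟩
  simp [hT t x this]

lemma gG_hasFDerivAt (n : ℕ) (y v : E n) :
    Differentiable ℝ (gG n) ∧ fderiv ℝ (gG n) y v = -(1/2) * inner ℝ y v * gG n y := by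
  have h : ∀ y, HasFDerivAt (gG n) ((4 * Real.pi) ^ (-(n : ℝ) / 2) •
      (Real.exp (-(1/4) * ‖y‖ ^ 2) • ((-(1/4) : ℝ) • (2 • (innerSL ℝ y))))) y := fun y => by
    have := (((hasStrictFDerivAt_norm_sq y).hasFDerivAt.const_mul (-(1/4) : ℝ)).exp).const_mul
      ((4 * Real.pi) ^ (-(n : ℝ) / 2))
    exact this
  refine ⟨fun y => (h y).differentiableAt, ?_⟩
  rw [(h y).fderiv]
  simp [gG]
  ring

/-- Gaussian integration by parts. -/
lemma gG_parts (n : ℕ) {w : (E n) → ℝ} (hw : ContDiff ℝ 1 w) (hs : HasCompactSupport w) (v : E n) :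
    Integrable (fun y => gG n y * (inner ℝ y v * w y)) ∧
    ∫ y, gG n y * (inner ℝ y v * w y) = 2 * ∫ y, gG n y * fderiv ℝ w y v := by
  have hd : Continuous (fun y => fderiv ℝ w y v) :=
    (hw.continuous_fderiv (by norm_num)).clm_apply continuous_const
  have hg := gG_cont n
  have i0 : Integrable (fun y => gG n y * (inner ℝ y v * w y)) := by
    apply Continuous.integrable_of_hasCompactSupport
    · have := hw.continuous
      fun_prop
    · exact (hs.mul_left).mul_left
  have key := integral_mul_fderiv_eq_neg_fderiv_mul_of_integrable (μ := (volume : Measure (E n)))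
    (f := gG n) (g := w) (v := v) ?_ ?_ ?_ ?_ ?_
  · refine ⟨i0, ?_⟩
    rw [key, ← integral_neg, ← integral_const_mul]
    congr 1; ext y
    rw [(gG_hasFDerivAt n y v).2]; ring
  · refine (i0.const_mul (-(1/2))).congr (Eventually.of_forall fun y => ?_)
    simp only [(gG_hasFDerivAt n y v).2]; ring
  · exact (hg.mul hd).integrable_of_hasCompactSupport ((hs.fderiv_apply (𝕜 := ℝ) v).mul_left)
  · exact (hg.mul hw.continuous).integrable_of_hasCompactSupport hs.mul_left
  · exact fun x _ => (gG_hasFDerivAt n x v).1 x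
  · exact fun x _ => hw.differentiable (by norm_num) x

lemma slice_parts {n : ℕ} {u : ℝ × (E n) → ℝ} (hu : ContDiff ℝ 1 u) (hs : HasCompactSupport u)
    {t : ℝ} (ht : 0 < t) (v : E n) :
    Integrable (fun y => gG n y * (inner ℝ y v * u (t, √t • y))) ∧
    ∫ y, gG n y * (inner ℝ y v * u (t, √t • y)) =
      (2 * √t) * ∫ y, gG n y * fderiv ℝ u (t, √t • y) (0, v) := by
  have hst : 0 < √t := Real.sqrt_pos.2 ht
  have hw : ContDiff ℝ 1 (fun y : E n => u (t, √t • y)) := by fun_prop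
  have hemb0 : IsClosedEmbedding (Prod.mk t : (E n) → ℝ × (E n)) := by
    refine ⟨isEmbedding_prodMkRight t, ?_⟩
    have : range (Prod.mk t : (E n) → ℝ × (E n)) = Prod.fst ⁻¹' {t} := by
      ext ⟨a, b⟩; simp [eq_comm]
    rw [this]
    exact isClosed_singleton.preimage continuous_fst
  have hemb : IsClosedEmbedding (fun y : E n => (t, √t • y)) :=
    hemb0.comp (Homeomorph.smulOfNeZero (√t) hst.ne').isClosedEmbedding
  have hws : HasCompactSupport (fun y : E n => u (t, √t • y)) := hs.comp_isClosedEmbedding hemb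
  obtain ⟨h1, h2⟩ := gG_parts n hw hws v
  refine ⟨h1, ?_⟩
  rw [h2, mul_assoc]
  congr 1
  rw [← integral_const_mul]
  congr 1; ext y
  have hy : HasFDerivAt (fun y : E n => (t, √t • y))
      ((0 : (E n) →L[ℝ] ℝ).prod (√t • ContinuousLinearMap.id ℝ (E n))) y :=
    (hasFDerivAt_const t y).prodMk ((hasFDerivAt_id y).const_smul (√t))
  have hf := ((hu.differentiable (by norm_num) (t, √t • y)).hasFDerivAt.comp y hy).fderiv
  have e : (u ∘ fun y : E n => (t, √t • y)) = fun y => u (t, √t • y) := rfl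
  rw [e] at hf
  rw [hf]
  simp only [ContinuousLinearMap.comp_apply, ContinuousLinearMap.prod_apply,
    ContinuousLinearMap.zero_apply, ContinuousLinearMap.smul_apply, ContinuousLinearMap.id_apply]
  rw [show ((0:ℝ), √t • v) = √t • ((0:ℝ), v) by simp, map_smul, smul_eq_mul]
  ring

noncomputable def FF (n : ℕ) (φ : ℝ × (E n) → ℝ) (t : ℝ) : ℝ := ∫ y, gG n y * φ (t, √t • y)

lemma FF_cont {n : ℕ} {φ : ℝ × (E n) → ℝ} (hc : Continuous φ) (hs : HasCompactSupport φ) :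
    Continuous (FF n φ) := by
  obtain ⟨C, hC⟩ := hs.exists_bound_of_continuous hc
  have hg := gG_cont n
  unfold FF
  refine continuous_of_dominated (bound := fun y => gG n y * C) ?_ ?_ ((gG_int n).mul_const C) ?_
  · intro t
    exact Continuous.aestronglyMeasurable (by fun_prop)
  · intro t
    refine Eventually.of_forall fun y => ?_
    rw [norm_mul, Real.norm_of_nonneg (gG_nonneg n y)]
    exact mul_le_mul_of_nonneg_left (hC _) (gG_nonneg n y)
  · refine Eventually.of_forall fun y => ?_
    have := Real.continuous_sqrt
    fun_prop

lemma FF_deriv0 {n : ℕ} {φ : ℝ × (E n) → ℝ} (hφ : ContDiff ℝ 1 φ) (hs : HasCompactSupport φ)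
    {t : ℝ} (ht : 0 < t) :
    HasDerivAt (FF n φ)
      (∫ y, gG n y * fderiv ℝ φ (t, √t • y) (1, (1/(2*√t)) • y)) t := by
  have hd : Continuous (fderiv ℝ φ) := hφ.continuous_fderiv (by norm_num)
  obtain ⟨C, hC⟩ := (hs.fderiv (𝕜 := ℝ)).exists_bound_of_continuous hd
  obtain ⟨C0, hC0⟩ := hs.exists_bound_of_continuous hφ.continuous
  have hCn : 0 ≤ C := (norm_nonneg _).trans (hC 0)
  have hg := gG_cont n
  have hφc := hφ.continuous
  have ht2 : 0 < t/2 := by positivity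
  have hst2 : 0 < √(t/2) := Real.sqrt_pos.2 ht2
  refine (hasDerivAt_integral_of_dominated_loc_of_deriv_le (μ := (volume : Measure (E n)))
    (F := fun t y => gG n y * φ (t, √t • y))
    (F' := fun t y => gG n y * fderiv ℝ φ (t, √t • y) (1, (1/(2*√t)) • y))
    (bound := fun y => C * gG n y + C * (1/(2*√(t/2))) * (gG n y * ‖y‖))
    (Ioi_mem_nhds (show t/2 < t by linarith)) ?_ ?_ ?_ ?_ ?_ ?_).2
  · exact Eventually.of_forall fun s => Continuous.aestronglyMeasurable (by fun_prop)
  · refine (gG_int n).mul_bdd (c := C0) (f := gG n) (g := fun y => φ (t, √t • y))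
      (Continuous.aestronglyMeasurable (by fun_prop)) (Eventually.of_forall fun y => hC0 _)
  · refine Continuous.aestronglyMeasurable (hg.mul (Continuous.clm_apply ?_ ?_)) <;> fun_prop
  · refine Eventually.of_forall fun y s hs => ?_
    have hs' : t/2 < s := hs
    rw [norm_mul, Real.norm_of_nonneg (gG_nonneg n y)]
    have hss : √(t/2) ≤ √s := Real.sqrt_le_sqrt hs'.le
    have h1 : ‖((1:ℝ), (1/(2*√s)) • y)‖ ≤ 1 + 1/(2*√(t/2)) * ‖y‖ := by
      rw [Prod.norm_def]
      refine max_le ?_ ?_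
      · simp; positivity
      · rw [norm_smul, Real.norm_of_nonneg (by positivity)]
        have : 1/(2*√s) * ‖y‖ ≤ 1/(2*√(t/2)) * ‖y‖ := by gcongr
        linarith
    calc _ ≤ gG n y * (C * (1 + 1/(2*√(t/2)) * ‖y‖)) := by
          refine mul_le_mul_of_nonneg_left ?_ (gG_nonneg n y)
          refine (ContinuousLinearMap.le_opNorm _ _).trans ?_
          exact mul_le_mul (hC _) h1 (norm_nonneg _) hCn
      _ = _ := by ring
  · exact ((gG_int n).const_mul _).add ((gG_norm_int n).const_mul _)
  · refine Eventually.of_forall fun y s hs => ?_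
    have hs' : t/2 < s := hs
    have hs0 : s ≠ 0 := by linarith
    have hin : HasDerivAt (fun s : ℝ => (s, √s • y)) (1, (1/(2*√s)) • y) s :=
      (hasDerivAt_id s).prodMk ((Real.hasDerivAt_sqrt hs0).smul_const y)
    exact ((hφ.differentiable (by norm_num) (s, √s • y)).hasFDerivAt.comp_hasDerivAt s hin).const_mul _

lemma basis_sum {n : ℕ} (y : E n) :
    y = ∑ i, (inner ℝ y (EuclideanSpace.single i (1:ℝ))) • EuclideanSpace.single i (1:ℝ) := by
  have := (EuclideanSpace.basisFun (Fin n) ℝ).sum_repr y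
  simp at this
  have h2 : ∀ i, inner ℝ y (EuclideanSpace.single i (1:ℝ)) = y i := fun i => by
    rw [EuclideanSpace.inner_single_right]; simp
  simp only [h2]
  exact this.symm

noncomputable def LL (n : ℕ) (φ : ℝ × (E n) → ℝ) (p : ℝ × (E n)) : ℝ :=
  fderiv ℝ φ p (1, 0) + ∑ i : Fin n,
    fderiv ℝ (fun q => fderiv ℝ φ q (0, EuclideanSpace.single i (1:ℝ))) p
      (0, EuclideanSpace.single i (1:ℝ))

lemma D_smooth {n : ℕ} {φ : ℝ × (E n) → ℝ} (hφ : ContDiff ℝ (⊤ : ℕ∞) φ) (v : ℝ × (E n)) :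
    ContDiff ℝ (⊤ : ℕ∞) (fun q => fderiv ℝ φ q v) :=
  (hφ.fderiv_right (m := (⊤ : ℕ∞)) (by exact_mod_cast le_top)).clm_apply contDiff_const

lemma LL_cont {n : ℕ} {φ : ℝ × (E n) → ℝ} (hφ : ContDiff ℝ (⊤ : ℕ∞) φ) : Continuous (LL n φ) := by
  unfold LL
  exact (D_smooth hφ _).continuous.add
    (continuous_finsetSum _ fun i _ => (D_smooth (D_smooth hφ _) _).continuous)

lemma LL_supp {n : ℕ} {φ : ℝ × (E n) → ℝ} (hs : HasCompactSupport φ) :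
    HasCompactSupport (LL n φ) := by
  refine hs.mono' ?_
  intro p hp
  by_contra h
  apply hp
  have h1 : ∀ v, p ∉ tsupport (fun q => fderiv ℝ φ q v) :=
    fun v h' => h (tsupport_fderiv_apply_subset ℝ v h')
  have h2 : ∀ v w, fderiv ℝ (fun q => fderiv ℝ φ q v) p w = 0 := fun v w => by
    have := fun h' => h1 v (tsupport_fderiv_apply_subset ℝ w h')
    exact image_eq_zero_of_notMem_tsupport (f := fun q => fderiv ℝ (fun q => fderiv ℝ φ q v) q w) this
  unfold LL
  rw [image_eq_zero_of_notMem_tsupport (h1 (1,0))]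
  simp [h2]

lemma FF_deriv {n : ℕ} {φ : ℝ × (E n) → ℝ} (hφ : ContDiff ℝ (⊤ : ℕ∞) φ) (hs : HasCompactSupport φ)
    {t : ℝ} (ht : 0 < t) :
    HasDerivAt (FF n φ) (∫ x, Sn n t x * LL n φ (t, x)) t := by
  have hst : 0 < √t := Real.sqrt_pos.2 ht
  convert FF_deriv0 (hφ.of_le (by exact_mod_cast le_top)) hs ht using 1
  rw [Sn_integral n ht (fun x => LL n φ (t, x))]
  have bint : ∀ {u : ℝ × (E n) → ℝ}, Continuous u → HasCompactSupport u →
      Integrable (fun y => gG n y * u (t, √t • y)) := fun {u} hu hus => by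
    obtain ⟨C, hC⟩ := hus.exists_bound_of_continuous hu
    exact (gG_int n).mul_bdd (c := C) (f := gG n) (g := fun y => u (t, √t • y))
      (Continuous.aestronglyMeasurable (by fun_prop)) (Eventually.of_forall fun y => hC _)
  have e1 : ∀ y : E n, gG n y * fderiv ℝ φ (t, √t • y) (1, (1/(2*√t)) • y) =
      gG n y * fderiv ℝ φ (t, √t • y) (1, 0) + ∑ i, (1/(2*√t)) *
        (gG n y * (inner ℝ y (EuclideanSpace.single i (1:ℝ)) *
          fderiv ℝ φ (t, √t • y) (0, EuclideanSpace.single i (1:ℝ)))) := fun y => by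
    have : ((1:ℝ), (1/(2*√t)) • y) = (1, 0) + (1/(2*√t)) • ∑ i,
        (inner ℝ y (EuclideanSpace.single i (1:ℝ))) • ((0:ℝ), EuclideanSpace.single i (1:ℝ)) := by
      ext1
      · simp [Prod.fst_sum]
      · simp only [Prod.snd_add, Prod.smul_snd, Prod.snd_sum, zero_add]
        rw [← basis_sum y]
    rw [this, map_add, map_smul, map_sum, mul_add, smul_eq_mul, Finset.mul_sum, Finset.mul_sum]
    congr 1
    refine Finset.sum_congr rfl fun i _ => ?_
    rw [map_smul, smul_eq_mul]; ring
  simp_rw [e1]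
  have hsl := fun i : Fin n => slice_parts (u := fun q => fderiv ℝ φ q (0, EuclideanSpace.single i (1:ℝ)))
    ((D_smooth hφ _).of_le (by exact_mod_cast le_top)) (hs.fderiv_apply (𝕜 := ℝ) _) ht
    (EuclideanSpace.single i (1:ℝ))
  have b0 := bint (D_smooth hφ (1, 0)).continuous (hs.fderiv_apply (𝕜 := ℝ) _)
  rw [integral_add b0 (integrable_finsetSum _ fun i _ => (hsl i).1.const_mul _),
    integral_finsetSum _ (fun i _ => (hsl i).1.const_mul _)]
  have b2 := fun i : Fin n => bint
    (D_smooth (D_smooth hφ (0, EuclideanSpace.single i (1:ℝ))) (0, EuclideanSpace.single i (1:ℝ))).continuous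
    ((hs.fderiv_apply (𝕜 := ℝ) _).fderiv_apply (𝕜 := ℝ) _)
  simp only [LL, mul_add, Finset.mul_sum]
  rw [integral_add b0 (integrable_finsetSum _ fun i _ => b2 i), integral_finsetSum _ (fun i _ => b2 i)]
  congr 1
  refine Finset.sum_congr rfl fun i _ => ?_
  rw [integral_const_mul, (hsl i).2]
  field_simp

lemma line_deriv {n : ℕ} {φ : ℝ × (E n) → ℝ} (hφ : Differentiable ℝ φ) (t : ℝ) (x v : E n) (s : ℝ) :
    HasDerivAt (fun s : ℝ => φ (t, x + s • v)) (fderiv ℝ φ (t, x + s • v) (0, v)) s := by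
  have hin : HasDerivAt (fun s : ℝ => (t, x + s • v)) (0, v) s := by
    have := (hasDerivAt_const s t).prodMk (((hasDerivAt_id s).smul_const v).const_add x)
    simpa using this
  exact (hφ (t, x + s • v)).hasFDerivAt.comp_hasDerivAt s hin

lemma LL_eq {n : ℕ} {φ : ℝ × (E n) → ℝ} (hφ : ContDiff ℝ (⊤ : ℕ∞) φ) (p : ℝ × (E n)) :
    (-(deriv (fun s : ℝ => φ (s, p.2)) p.1) -
            ∑ i : Fin n,
              iteratedDeriv 2 (fun s : ℝ => φ (p.1, p.2 + s • EuclideanSpace.single i (1 : ℝ))) 0)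
    = - LL n φ p := by
  obtain ⟨t, x⟩ := p
  have hd : Differentiable ℝ φ := hφ.differentiable (by simp)
  have h1 : deriv (fun s : ℝ => φ (s, x)) t = fderiv ℝ φ (t, x) (1, 0) := by
    have hin : HasDerivAt (fun s : ℝ => (s, x)) (1, 0) t :=
      (hasDerivAt_id t).prodMk (hasDerivAt_const t x)
    exact ((hd (t, x)).hasFDerivAt.comp_hasDerivAt t hin).deriv
  have h2 : ∀ v : E n, iteratedDeriv 2 (fun s : ℝ => φ (t, x + s • v)) 0 =
      fderiv ℝ (fun q => fderiv ℝ φ q (0, v)) (t, x) (0, v) := fun v => by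
    rw [iteratedDeriv_succ, iteratedDeriv_one]
    have : deriv (fun s : ℝ => φ (t, x + s • v)) = fun s => fderiv ℝ φ (t, x + s • v) (0, v) :=
      funext fun s => (line_deriv hd t x v s).deriv
    rw [this]
    have := (line_deriv ((D_smooth hφ (0, v)).differentiable (by simp)) t x v 0).deriv
    simpa using this
  simp only [h1, h2, LL]
  ring

end helpers

/-- `S_n` is a fundamental solution of the heat operator `∂_t − Δ` with pole at `(0,0)`:
for every compactly supported smooth test function `φ` on `ℝ × ℝⁿ`, the integral of
`S_n · (−∂_t φ − Δφ)` over `(0,∞) × ℝⁿ` converges absolutely and equals `φ(0,0)`. -/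
theorem Sn_fundamental_solution (n : ℕ) (hn : 2 ≤ n)
    (φ : ℝ × EuclideanSpace ℝ (Fin n) → ℝ)
    (hφ : ContDiff ℝ (⊤ : ℕ∞) φ) (hφsupp : HasCompactSupport φ) :
    IntegrableOn
      (fun p : ℝ × EuclideanSpace ℝ (Fin n) =>
        Sn n p.1 p.2 *
          (-(deriv (fun s : ℝ => φ (s, p.2)) p.1) -
            ∑ i : Fin n,
              iteratedDeriv 2 (fun s : ℝ => φ (p.1, p.2 + s • EuclideanSpace.single i (1 : ℝ))) 0))
      (Set.Ioi (0 : ℝ) ×ˢ (Set.univ : Set (EuclideanSpace ℝ (Fin n)))) ∧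
    (∫ p in Set.Ioi (0 : ℝ) ×ˢ (Set.univ : Set (EuclideanSpace ℝ (Fin n))),
        Sn n p.1 p.2 *
          (-(deriv (fun s : ℝ => φ (s, p.2)) p.1) -
            ∑ i : Fin n,
              iteratedDeriv 2 (fun s : ℝ => φ (p.1, p.2 + s • EuclideanSpace.single i (1 : ℝ))) 0))
      = φ (0, 0) := by
  simp_rw [LL_eq hφ]
  have hi : IntegrableOn (fun p => Sn n p.1 p.2 * -LL n φ p) (Set.Ioi 0 ×ˢ Set.univ) volume :=
    Snψ_int (LL_cont hφ).neg (LL_supp hφsupp).neg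
  refine ⟨hi, ?_⟩
  have hi2 := hi
  unfold IntegrableOn at hi2
  rw [Measure.volume_eq_prod, ← Measure.prod_restrict, Measure.restrict_univ] at hi2
  rw [Measure.volume_eq_prod, ← Measure.prod_restrict, Measure.restrict_univ, integral_prod _ hi2]
  have hi3 := hi2.integral_prod_left
  have hneg : ∀ t, ∫ x, Sn n t x * -LL n φ (t, x) = -∫ x, Sn n t x * LL n φ (t, x) := fun t => by
    rw [← integral_neg]; congr 1; ext x; ring
  simp only [hneg] at hi3
  simp only [hneg]
  obtain ⟨T, hT⟩ := supp_T hφsupp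
  have hF := integral_Ioi_of_hasDerivAt_of_tendsto (a := 0) (m := 0) (f := FF n φ)
    (FF_cont hφ.continuous hφsupp).continuousWithinAt (fun t ht => FF_deriv hφ hφsupp ht)
    (by unfold IntegrableOn; simpa using hi3.neg) ?_
  · rw [integral_neg, hF]
    simp [FF, integral_mul_const, gG_integral]
  · refine tendsto_const_nhds.congr' ?_
    filter_upwards [Filter.eventually_gt_atTop T] with t ht
    simp [FF, hT t _ ht]
end

section
/- Assume σ is upper (n−1)-Ahlfors regular with constant c. Then for every β ∈ (0,1) there exists a constant C > 0, depending only on n, c, T, β and σ(ℝⁿ), such that the single layer heat potential satisfies the Hölder estimate in space |v[μ](t,x₁) − v[μ](t,x₂)| ≤ C·(sup |μ|)·‖x₁ − x₂‖^β for all t ∈ [0,T] and all x₁, x₂ ∈ ℝⁿ. -/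
open Real MeasureTheory

/-- The single layer heat potential `v[μ](t,x) = ∫₀ᵗ ∫ S_n(t−τ, x−y) μ(τ,y) dσ(y) dτ`. -/
noncomputable def singleLayer (n : ℕ) (σ : Measure (EuclideanSpace ℝ (Fin n)))
    (μ : ℝ → EuclideanSpace ℝ (Fin n) → ℝ) (t : ℝ) (x : EuclideanSpace ℝ (Fin n)) : ℝ :=
  ∫ τ in Set.Ioc (0 : ℝ) t, ∫ y, Sn n (t - τ) (x - y) * μ τ y ∂σ

lemma aux_gauss_le (β : ℝ) (hβ : β ∈ Set.Ioo (0 : ℝ) 1) (u v : ℝ) (hu : 0 ≤ u) (huv : u ≤ v) :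
    Real.exp (-u ^ 2) - Real.exp (-v ^ 2) ≤ 4 * (v - u) ^ β * Real.exp (-u ^ 2 / 2) := by
  obtain ⟨h0, h1⟩ := hβ
  have hE : Real.exp (-u ^ 2) = Real.exp (-u ^ 2 / 2) * Real.exp (-u ^ 2 / 2) := by
    rw [← Real.exp_add]; congr 1; ring
  have hpos := Real.exp_pos (-u ^ 2 / 2)
  have hle1 : Real.exp (-u ^ 2 / 2) ≤ 1 := by
    apply Real.exp_le_one_iff.2; nlinarith [sq_nonneg u]
  have hd : 0 ≤ v - u := by linarith
  rcases le_total 1 (v - u) with h | h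
  · have h2 : 1 ≤ (v - u) ^ β := Real.one_le_rpow h h0.le
    have := Real.exp_pos (-v ^ 2)
    nlinarith
  · have h2 : v - u ≤ (v - u) ^ β := by
      rcases hd.eq_or_lt with h3 | h3
      · rw [← h3]; exact Real.rpow_nonneg le_rfl _
      · calc v - u = (v - u) ^ (1 : ℝ) := (Real.rpow_one _).symm
          _ ≤ _ := Real.rpow_le_rpow_of_exponent_ge h3 h h1.le
    have h3 : Real.exp (-v ^ 2) = Real.exp (-u ^ 2) * Real.exp (-(v ^ 2 - u ^ 2)) := by
      rw [← Real.exp_add]; congr 1; ring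
    have h4 : 1 - (v ^ 2 - u ^ 2) ≤ Real.exp (-(v ^ 2 - u ^ 2)) := by
      have := Real.add_one_le_exp (-(v ^ 2 - u ^ 2)); linarith
    have h5 : Real.exp (-u ^ 2 / 2) * (2 * u + 1) ≤ 4 := by
      have h6 : Real.exp (-u ^ 2 / 2) * Real.exp (u ^ 2 / 2) = 1 := by
        rw [← Real.exp_add, ← Real.exp_zero]; congr 1; ring
      have h7 := Real.add_one_le_exp (u ^ 2 / 2)
      have h8 : 2 * u + 1 ≤ 4 * Real.exp (u ^ 2 / 2) := by nlinarith [sq_nonneg (u - 1)]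
      calc _ ≤ Real.exp (-u ^ 2 / 2) * (4 * Real.exp (u ^ 2 / 2)) := by gcongr
        _ = 4 := by linear_combination 4 * h6
    have h9 : v ^ 2 - u ^ 2 ≤ (v - u) * (2 * u + 1) := by nlinarith
    calc Real.exp (-u ^ 2) - Real.exp (-v ^ 2)
        = Real.exp (-u ^ 2) * (1 - Real.exp (-(v ^ 2 - u ^ 2))) := by rw [h3]; ring
      _ ≤ Real.exp (-u ^ 2) * ((v - u) * (2 * u + 1)) := by gcongr; linarith
      _ = (Real.exp (-u ^ 2 / 2) * (2 * u + 1)) * (v - u) * Real.exp (-u ^ 2 / 2) := by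
          rw [hE]; ring
      _ ≤ 4 * (v - u) ^ β * Real.exp (-u ^ 2 / 2) := by gcongr

lemma aux_gauss_abs (β : ℝ) (hβ : β ∈ Set.Ioo (0 : ℝ) 1) (u v : ℝ) (hu : 0 ≤ u) (hv : 0 ≤ v) :
    |Real.exp (-u ^ 2) - Real.exp (-v ^ 2)| ≤
      4 * |u - v| ^ β * (Real.exp (-u ^ 2 / 2) + Real.exp (-v ^ 2 / 2)) := by
  have key : ∀ a b : ℝ, 0 ≤ a → a ≤ b → |Real.exp (-a ^ 2) - Real.exp (-b ^ 2)| ≤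
      4 * |a - b| ^ β * (Real.exp (-a ^ 2 / 2) + Real.exp (-b ^ 2 / 2)) := by
    intro a b ha hab
    have h1 : Real.exp (-b ^ 2) ≤ Real.exp (-a ^ 2) := by
      apply Real.exp_le_exp.2; nlinarith
    rw [abs_of_nonneg (by linarith), abs_sub_comm a b, abs_of_nonneg (sub_nonneg.2 hab)]
    refine (aux_gauss_le β hβ a b ha hab).trans ?_
    have h2 : 0 ≤ (b - a) ^ β := Real.rpow_nonneg (by linarith) _
    have h3 := Real.exp_pos (-b ^ 2 / 2)
    gcongr
    linarith
  rcases le_total u v with h | h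
  · exact key u v hu h
  · rw [abs_sub_comm, abs_sub_comm u v, add_comm (Real.exp (-u ^ 2 / 2))]
    exact key v u hv h

lemma aux_int (n : ℕ) (c : ℝ) (hc : 0 < c) :
    ∃ A : ℝ, 0 < A ∧ ∀ σ : Measure (EuclideanSpace ℝ (Fin n)), IsFiniteMeasure σ →
      (∀ (x : EuclideanSpace ℝ (Fin n)) (r : ℝ), 0 < r →
        σ (Metric.closedBall x r) ≤ ENNReal.ofReal (c * r ^ (n - 1))) →
      ∀ (x : EuclideanSpace ℝ (Fin n)) (R : ℝ), 0 < R →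
        ∫ y, Real.exp (-(‖x - y‖ / R) ^ 2 / 2) ∂σ ≤ A * R ^ (n - 1) := by
  have hs : Summable (fun k : ℕ => ((k : ℝ) + 1) ^ (n - 1) * Real.exp (-(k : ℝ) / 2)) := by
    have h1 := Real.summable_pow_mul_exp_neg_nat_mul (n - 1) (r := 1 / 2) (by norm_num)
    have h2 := ((summable_nat_add_iff 1).2 h1).mul_left (Real.exp (1 / 2))
    refine h2.congr fun k => ?_
    push_cast
    have : Real.exp (-(k : ℝ) / 2) = Real.exp (1 / 2) * Real.exp (-(1 / 2) * ((k : ℝ) + 1)) := by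
      rw [← Real.exp_add]; congr 1; ring
    rw [this]; ring
  set B := ∑' k : ℕ, ((k : ℝ) + 1) ^ (n - 1) * Real.exp (-(k : ℝ) / 2) with hB
  have hB0 : 0 < B := hs.tsum_pos (fun k => by positivity) 0 (by simp)
  refine ⟨c * B, by positivity, ?_⟩
  intro σ _ hσ x R hR
  rw [integral_eq_lintegral_of_nonneg_ae (Filter.Eventually.of_forall fun y => by positivity)
    (by fun_prop)]
  apply ENNReal.toReal_le_of_le_ofReal (by positivity)
  have hpt : ∀ y, ENNReal.ofReal (Real.exp (-(‖x - y‖ / R) ^ 2 / 2)) ≤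
      ∑' k : ℕ, (Metric.closedBall x (((k : ℝ) + 1) * R)).indicator
        (fun _ => ENNReal.ofReal (Real.exp (-(k : ℝ) / 2))) y := by
    intro y
    set ρ := ‖x - y‖ / R with hρ
    have hρ0 : 0 ≤ ρ := by positivity
    refine le_trans ?_ (ENNReal.le_tsum ⌊ρ⌋₊)
    have hfl := Nat.floor_le hρ0
    have hlt := Nat.lt_floor_add_one ρ
    have hmem : y ∈ Metric.closedBall x (((⌊ρ⌋₊ : ℝ) + 1) * R) := by
      rw [Metric.mem_closedBall, dist_comm, dist_eq_norm]
      have := (div_lt_iff₀ hR).1 (hρ ▸ hlt)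
      exact this.le
    rw [Set.indicator_of_mem hmem]
    apply ENNReal.ofReal_le_ofReal
    apply Real.exp_le_exp.2
    have h1 : (⌊ρ⌋₊ : ℝ) ≤ (⌊ρ⌋₊ : ℝ) ^ 2 := by
      exact_mod_cast Nat.le_self_pow (by norm_num) _
    have h2 : (⌊ρ⌋₊ : ℝ) ^ 2 ≤ ρ ^ 2 := by gcongr
    linarith
  calc ∫⁻ y, ENNReal.ofReal (Real.exp (-(‖x - y‖ / R) ^ 2 / 2)) ∂σ
      ≤ ∫⁻ y, ∑' k : ℕ, (Metric.closedBall x (((k : ℝ) + 1) * R)).indicator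
        (fun _ => ENNReal.ofReal (Real.exp (-(k : ℝ) / 2))) y ∂σ := lintegral_mono hpt
    _ = ∑' k : ℕ, ENNReal.ofReal (Real.exp (-(k : ℝ) / 2)) *
          σ (Metric.closedBall x (((k : ℝ) + 1) * R)) := by
        rw [lintegral_tsum]
        · congr 1; ext k
          rw [lintegral_indicator_const Metric.isClosed_closedBall.measurableSet]
        · intro k
          exact (measurable_const.indicator Metric.isClosed_closedBall.measurableSet).aemeasurable
    _ ≤ ∑' k : ℕ, ENNReal.ofReal (c * R ^ (n - 1) *
          (((k : ℝ) + 1) ^ (n - 1) * Real.exp (-(k : ℝ) / 2))) := by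
        apply ENNReal.tsum_le_tsum
        intro k
        refine (mul_le_mul_right (hσ x (((k : ℝ) + 1) * R) (by positivity)) _).trans ?_
        rw [← ENNReal.ofReal_mul (by positivity)]
        apply ENNReal.ofReal_le_ofReal
        rw [mul_pow]
        apply le_of_eq; ring
    _ = ENNReal.ofReal (c * B * R ^ (n - 1)) := by
        rw [← ENNReal.ofReal_tsum_of_nonneg (fun k => by positivity) (hs.mul_left _), tsum_mul_left]
        congr 1; ring

lemma aux_Sn (n : ℕ) (s : ℝ) (hs : 0 < s) :
    ∃ κ : ℝ, 0 ≤ κ ∧ κ ≤ ((2 * √s) ^ n)⁻¹ ∧ ∀ z : EuclideanSpace ℝ (Fin n),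
      Sn n s z = κ * Real.exp (-(‖z‖ / (2 * √s)) ^ 2) := by
  refine ⟨(4 * Real.pi * s) ^ (-(n : ℝ) / 2), by positivity, ?_, ?_⟩
  · have h1 : ((2 * √s) ^ n)⁻¹ = (4 * s) ^ (-(n : ℝ) / 2) := by
      have h2 : 4 * s = (2 * √s) ^ (2 : ℝ) := by
        rw [Real.rpow_two, mul_pow, Real.sq_sqrt hs.le]; norm_num
      rw [h2, ← Real.rpow_mul (by positivity), ← Real.rpow_natCast, ← Real.rpow_neg (by positivity)]
      congr 1; ring
    rw [h1]
    apply Real.rpow_le_rpow_of_nonpos (by positivity)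
    · nlinarith [Real.pi_gt_three]
    · have : (0 : ℝ) ≤ n := by positivity
      linarith
  · intro z
    rw [Sn, if_pos hs, div_pow, mul_pow, Real.sq_sqrt hs.le]
    congr 2; rw [neg_div]; norm_num

lemma aux_meas (n : ℕ) : Measurable (fun p : ℝ × EuclideanSpace ℝ (Fin n) => Sn n p.1 p.2) := by
  unfold Sn
  refine Measurable.ite (measurableSet_lt measurable_const measurable_fst) ?_ measurable_const
  fun_prop

lemma aux_gint (n : ℕ) (σ : Measure (EuclideanSpace ℝ (Fin n))) [IsFiniteMeasure σ]
    (x : EuclideanSpace ℝ (Fin n)) (R : ℝ) :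
    Integrable (fun y => Real.exp (-(‖x - y‖ / R) ^ 2 / 2)) σ := by
  refine Integrable.of_bound (C := 1) (by fun_prop) (Filter.Eventually.of_forall fun y => ?_)
  rw [Real.norm_eq_abs, abs_of_nonneg (by positivity)]
  apply Real.exp_le_one_iff.2
  nlinarith [sq_nonneg (‖x - y‖ / R)]

lemma aux_key (n : ℕ) (hn : 2 ≤ n) (β : ℝ) (hβ : β ∈ Set.Ioo (0 : ℝ) 1) (A : ℝ) (hA : 0 < A)
    (σ : Measure (EuclideanSpace ℝ (Fin n))) [IsFiniteMeasure σ]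
    (hσ : ∀ (x : EuclideanSpace ℝ (Fin n)) (R : ℝ), 0 < R →
        ∫ y, Real.exp (-(‖x - y‖ / R) ^ 2 / 2) ∂σ ≤ A * R ^ (n - 1))
    (f : EuclideanSpace ℝ (Fin n) → ℝ) (hf : Measurable f) (M : ℝ) (hM : ∀ y, |f y| ≤ M)
    (s : ℝ) (hs : 0 ≤ s) (x₁ x₂ : EuclideanSpace ℝ (Fin n)) :
    |∫ y, Sn n s (x₁ - y) * f y ∂σ| ≤ A * M * s ^ (-(1 / 2) : ℝ) ∧
    |(∫ y, Sn n s (x₁ - y) * f y ∂σ) - ∫ y, Sn n s (x₂ - y) * f y ∂σ| ≤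
      8 * A * M * ‖x₁ - x₂‖ ^ β * s ^ (-(1 + β) / 2) := by
  have hM0 : 0 ≤ M := (abs_nonneg _).trans (hM 0)
  rcases hs.eq_or_lt with rfl | hs
  · simp only [Sn, lt_irrefl, if_false, zero_mul, integral_zero, sub_zero, abs_zero]
    constructor <;> positivity
  obtain ⟨κ, hκ0, hκ, hS⟩ := aux_Sn n s hs
  have hRpos : 0 < 2 * √s := by positivity
  have hR1 : (2 * √s)⁻¹ ≤ s ^ (-(1 / 2) : ℝ) := by
    rw [Real.rpow_neg hs.le, ← Real.sqrt_eq_rpow]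
    have : 0 < √s := by positivity
    gcongr; linarith
  have hpw : ∀ γ : ℝ, 0 ≤ γ → ((2 * √s) ^ γ)⁻¹ ≤ s ^ (-γ / 2) := by
    intro γ hγ
    have h1 : s ^ (-γ / 2) = (√s ^ γ)⁻¹ := by
      rw [Real.sqrt_eq_rpow, ← Real.rpow_mul hs.le, ← Real.rpow_neg hs.le]; congr 1; ring
    rw [h1]
    have : 0 < √s := by positivity
    gcongr; linarith
  set R := 2 * √s with hRdef
  have hκA : κ * (A * R ^ (n - 1)) ≤ A * R⁻¹ := by
    calc κ * (A * R ^ (n - 1)) ≤ (R ^ n)⁻¹ * (A * R ^ (n - 1)) := by gcongr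
      _ = A * R⁻¹ := by
        obtain ⟨k, rfl⟩ : ∃ k, n = k + 1 := ⟨n - 1, by omega⟩
        simp only [Nat.add_sub_cancel]
        field_simp
        ring
  have hexp : ∀ z : EuclideanSpace ℝ (Fin n),
      Real.exp (-(‖z‖ / R) ^ 2) ≤ Real.exp (-(‖z‖ / R) ^ 2 / 2) := by
    intro z; apply Real.exp_le_exp.2; nlinarith [sq_nonneg (‖z‖ / R)]
  have hbd : ∀ x y : EuclideanSpace ℝ (Fin n), ‖Sn n s (x - y) * f y‖ ≤
      κ * M * Real.exp (-(‖x - y‖ / R) ^ 2 / 2) := by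
    intro x y
    rw [hS, norm_mul, norm_mul, Real.norm_eq_abs, Real.norm_eq_abs, Real.norm_eq_abs,
      abs_of_nonneg hκ0, abs_of_nonneg (Real.exp_pos _).le]
    calc _ ≤ κ * Real.exp (-(‖x - y‖ / R) ^ 2 / 2) * M := by
          gcongr
          · exact Real.exp_le_exp.1 (hexp (x - y))
          · exact hM y
      _ = _ := by ring
  have hint : ∀ x, Integrable (fun y => Sn n s (x - y) * f y) σ := by
    intro x
    refine ((aux_gint n σ x R).const_mul (κ * M)).mono' ?_ (Filter.Eventually.of_forall (hbd x))
    have : Measurable fun y => Sn n s (x - y) :=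
      (aux_meas n).comp (measurable_const.prodMk (measurable_const.sub measurable_id))
    exact (this.mul hf).aestronglyMeasurable
  constructor
  · rw [← Real.norm_eq_abs]
    refine (norm_integral_le_of_norm_le ((aux_gint n σ x₁ R).const_mul (κ * M))
      (Filter.Eventually.of_forall (hbd x₁))).trans ?_
    rw [integral_const_mul]
    calc _ ≤ κ * M * (A * R ^ (n - 1)) := by gcongr; exact hσ x₁ R hRpos
      _ = M * (κ * (A * R ^ (n - 1))) := by ring
      _ ≤ M * (A * R⁻¹) := by gcongr
      _ ≤ M * (A * s ^ (-(1 / 2) : ℝ)) := by gcongr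
      _ = _ := by ring
  · rw [← integral_sub (hint x₁) (hint x₂), ← Real.norm_eq_abs]
    set D := ‖x₁ - x₂‖ with hD
    have hpt : ∀ y, ‖Sn n s (x₁ - y) * f y - Sn n s (x₂ - y) * f y‖ ≤
        κ * M * (4 * (D / R) ^ β) * (Real.exp (-(‖x₁ - y‖ / R) ^ 2 / 2) +
          Real.exp (-(‖x₂ - y‖ / R) ^ 2 / 2)) := by
      intro y
      rw [← sub_mul, hS, hS, ← mul_sub, norm_mul, norm_mul, Real.norm_eq_abs, Real.norm_eq_abs,
        Real.norm_eq_abs, abs_of_nonneg hκ0]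
      have h1 := aux_gauss_abs β hβ (‖x₁ - y‖ / R) (‖x₂ - y‖ / R) (by positivity) (by positivity)
      have h2 : |‖x₁ - y‖ / R - ‖x₂ - y‖ / R| ≤ D / R := by
        rw [← sub_div, abs_div, abs_of_pos hRpos]
        gcongr
        have := abs_norm_sub_norm_le (x₁ - y) (x₂ - y)
        rwa [sub_sub_sub_cancel_right] at this
      have h3 : |‖x₁ - y‖ / R - ‖x₂ - y‖ / R| ^ β ≤ (D / R) ^ β :=
        Real.rpow_le_rpow (abs_nonneg _) h2 hβ.1.le
      calc _ ≤ κ * (4 * (D / R) ^ β * (Real.exp (-(‖x₁ - y‖ / R) ^ 2 / 2) +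
          Real.exp (-(‖x₂ - y‖ / R) ^ 2 / 2))) * M := by
            gcongr
            · exact h1.trans (by gcongr)
            · exact hM y
        _ = _ := by ring
    refine (norm_integral_le_of_norm_le (((aux_gint n σ x₁ R).add (aux_gint n σ x₂ R)).const_mul _)
      (Filter.Eventually.of_forall hpt)).trans ?_
    rw [integral_const_mul, integral_add' (aux_gint n σ x₁ R) (aux_gint n σ x₂ R)]
    have hb := hβ.1
    calc _ ≤ κ * M * (4 * (D / R) ^ β) * (A * R ^ (n - 1) + A * R ^ (n - 1)) := by
          gcongr
          · exact hσ x₁ R hRpos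
          · exact hσ x₂ R hRpos
      _ = 8 * M * (D / R) ^ β * (κ * (A * R ^ (n - 1))) := by ring
      _ ≤ 8 * M * (D / R) ^ β * (A * R⁻¹) := by gcongr
      _ = 8 * A * M * D ^ β * (R ^ (1 + β))⁻¹ := by
          rw [Real.div_rpow (norm_nonneg _) hRpos.le, Real.rpow_add hRpos, Real.rpow_one, mul_inv]
          ring
      _ ≤ _ := by gcongr; exact hpw (1 + β) (by linarith)

lemma aux_time (p : ℝ) (hp : -1 < p) (t : ℝ) (ht : 0 ≤ t) :
    IntegrableOn (fun τ => (t - τ) ^ p) (Set.Ioc 0 t) ∧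
    ∫ τ in Set.Ioc 0 t, (t - τ) ^ p = t ^ (p + 1) / (p + 1) := by
  constructor
  · have h := (intervalIntegral.intervalIntegrable_rpow' (a := 0) (b := t) hp).comp_sub_left t
    simp only [sub_zero, sub_self] at h
    exact (intervalIntegrable_iff_integrableOn_Ioc_of_le ht).1 h.symm
  · rw [← intervalIntegral.integral_of_le ht,
      intervalIntegral.integral_comp_sub_left (fun s => s ^ p) t, sub_self, sub_zero,
      integral_rpow (Or.inl hp), Real.zero_rpow (by linarith), sub_zero]

/-- If `σ` is upper `(n−1)`-Ahlfors regular with constant `c`, then for every `β ∈ (0,1)` there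
is a constant `C > 0`, depending only on `n`, `c`, `T`, `β` and the total mass `σ(ℝⁿ)`, such
that the single layer heat potential is `β`-Hölder continuous in space, with constant
`C · sup|μ|`. -/
theorem singleLayer_holder_space (n : ℕ) (hn : 2 ≤ n) (c : ℝ) (hc : 0 < c)
    (T : ℝ) (hT : 0 < T) (β : ℝ) (hβ : β ∈ Set.Ioo (0 : ℝ) 1) (m : ENNReal) :
    ∃ C : ℝ, 0 < C ∧
      ∀ σ : Measure (EuclideanSpace ℝ (Fin n)), IsFiniteMeasure σ →
      σ Set.univ = m →
      ∀ K : Set (EuclideanSpace ℝ (Fin n)), IsCompact K →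
        K = {x | ∀ U : Set (EuclideanSpace ℝ (Fin n)), IsOpen U → x ∈ U → σ U ≠ 0} →
      (∀ (x : EuclideanSpace ℝ (Fin n)) (r : ℝ), 0 < r →
        σ (Metric.closedBall x r) ≤ ENNReal.ofReal (c * r ^ (n - 1))) →
      ∀ μ : ℝ → EuclideanSpace ℝ (Fin n) → ℝ, Measurable (Function.uncurry μ) →
      ∀ M : ℝ, (∀ t x, |μ t x| ≤ M) →
      ∀ t ∈ Set.Icc (0 : ℝ) T, ∀ x₁ x₂ : EuclideanSpace ℝ (Fin n),
        |singleLayer n σ μ t x₁ - singleLayer n σ μ t x₂| ≤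
          C * M * ‖x₁ - x₂‖ ^ β := by
  obtain ⟨A, hA, hAσ⟩ := aux_int n c hc
  have hb0 := hβ.1
  have hb1 := hβ.2
  have hp : -1 < -(1 + β) / 2 := by linarith
  have hq : 0 < -(1 + β) / 2 + 1 := by linarith
  refine ⟨8 * A * (T ^ (-(1 + β) / 2 + 1) / (-(1 + β) / 2 + 1)), by positivity, ?_⟩
  intro σ hfin _ K _ _ hreg μ hμ M hM t ht x₁ x₂
  have hM0 : 0 ≤ M := (abs_nonneg _).trans (hM 0 0)
  have hk := fun (τ : ℝ) (hτ : τ ∈ Set.Ioc 0 t) (x x' : EuclideanSpace ℝ (Fin n)) =>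
    aux_key n hn β hβ A hA σ (hAσ σ hfin hreg) (μ τ) (hμ.comp measurable_prodMk_left) M (hM τ)
      (t - τ) (by linarith [hτ.2]) x x'
  have hI : ∀ x, IntegrableOn (fun τ => ∫ y, Sn n (t - τ) (x - y) * μ τ y ∂σ) (Set.Ioc 0 t) := by
    intro x
    refine Integrable.mono' ((aux_time (-(1 / 2)) (by norm_num) t ht.1).1.const_mul (A * M)) ?_ ?_
    · have h1 : Measurable (fun p : ℝ × EuclideanSpace ℝ (Fin n) => Sn n (t - p.1) (x - p.2)) :=
        (aux_meas n).comp ((measurable_const.sub measurable_fst).prodMk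
          (measurable_const.sub measurable_snd))
      have h2 : Measurable (fun p : ℝ × EuclideanSpace ℝ (Fin n) =>
          Sn n (t - p.1) (x - p.2) * μ p.1 p.2) := h1.mul hμ
      exact (h2.stronglyMeasurable.integral_prod_right').aestronglyMeasurable
    · exact (ae_restrict_iff' measurableSet_Ioc).2
        (Filter.Eventually.of_forall fun τ hτ => (hk τ hτ x x).1)
  unfold singleLayer
  rw [← integral_sub (hI x₁) (hI x₂), ← Real.norm_eq_abs]
  obtain ⟨hT1, hT2⟩ := aux_time _ hp t ht.1
  refine (norm_integral_le_of_norm_le (hT1.const_mul (8 * A * M * ‖x₁ - x₂‖ ^ β))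
    ((ae_restrict_iff' measurableSet_Ioc).2
        (Filter.Eventually.of_forall fun τ hτ => (hk τ hτ x₁ x₂).2))).trans ?_
  rw [integral_const_mul, hT2]
  have h3 : t ^ (-(1 + β) / 2 + 1) ≤ T ^ (-(1 + β) / 2 + 1) :=
    Real.rpow_le_rpow ht.1 ht.2 hq.le
  calc _ ≤ 8 * A * M * ‖x₁ - x₂‖ ^ β * (T ^ (-(1 + β) / 2 + 1) / (-(1 + β) / 2 + 1)) := by gcongr
    _ = _ := by ring
end
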